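/- Let 𝕏_i = (X_i, d_{X_i}, ξ_i), i = 1, 2, be mm-spaces, let (Z, d_Z) be a compact metric space, and let λ > 0. If α minimizes F_λ over Borel probability measures on X₁ × Z × Z × X₂ with P_{X_i,#}α = ξ_i for i = 1, 2, then π := P_{Z₁×Z₂,#}α is a minimizer of the EW_λ problem, i.e., it attains the infimum in EW_λ(𝕏₁, 𝕏₂)², and the couplings γ_i := P_{X_i×Z_i,#}α attain GW²(𝕏_i, (Z, d_Z, P_{i,#}π)). Conversely, every minimizer π of the EW_λ problem arises as P_{Z₁×Z₂,#}α for some minimizer α of the constrained F_λ problem; in particular EW_λ(𝕏₁, 𝕏₂)² equals the infimum of F_λ(α) over all α with P_{X_i,#}α = ξ_i. -/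

import Mathlib

/-!
The two problems are related by the projection `α ↦ π` onto the middle coordinates. Since the
integrand of `F_λ` splits, `Flam_eq` gives
`F_λ(α) = ∫ d_Z² dπ + λ (GWobj γ₁ + GWobj γ₂)` with `γ_i` the `X_i × Z_i` marginals of `α`; as
`γ_i` couples `ξ_i` with the `i`-th marginal of `π`, `F_λ(α)` is at least the `EW_λ` objective
at `π`.

In the other direction (`exists_lift`) every `π` has a lift `α` at which equality holds: the
Gromov–Wasserstein infima are attained (`exists_GW_minimizer`: the set of couplings is weakly
compact and `GWobj` is weakly continuous), and optimal `γ₁`, `γ₂` are attached to `π` along its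
marginals by disintegration (`exists_glue`, used twice). Comparing the two infima yields all
claims; optimality of the `γ_i` follows from equality of the objectives and `λ > 0`.
-/

open MeasureTheory Filter Topology

noncomputable section

/-- The set of couplings (transport plans) between two measures. -/
def couplings {X Y : Type*} [MeasurableSpace X] [MeasurableSpace Y]
    (μ : Measure X) (ν : Measure Y) : Set (Measure (X × Y)) :=
  {π | π.map Prod.fst = μ ∧ π.map Prod.snd = ν}

/-- Squared Wasserstein-2 distance. -/
noncomputable def W2sq {Z : Type*} [MetricSpace Z] [MeasurableSpace Z]
    (μ ν : Measure Z) : ℝ :=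
  ⨅ π : couplings μ ν, ∫ p : Z × Z, dist p.1 p.2 ^ 2 ∂(π.1)

/-- Wasserstein-2 distance. -/
noncomputable def W2 {Z : Type*} [MetricSpace Z] [MeasurableSpace Z]
    (μ ν : Measure Z) : ℝ := Real.sqrt (W2sq μ ν)

/-- The Gromov--Wasserstein objective of a plan `γ`. -/
noncomputable def GWobj {X Y : Type*} [MetricSpace X] [MetricSpace Y]
    [MeasurableSpace X] [MeasurableSpace Y]
    (γ : Measure (X × Y)) : ℝ :=
  ∫ q : (X × Y) × (X × Y),
    (dist q.1.1 q.2.1 - dist q.1.2 q.2.2) ^ 2 ∂(γ.prod γ)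

/-- Squared Gromov--Wasserstein distance between `(X, d_X, ξ)` and `(Y, d_Y, ν)`. -/
noncomputable def GWsq {X Y : Type*} [MetricSpace X] [MetricSpace Y]
    [MeasurableSpace X] [MeasurableSpace Y]
    (ξ : Measure X) (ν : Measure Y) : ℝ :=
  ⨅ γ : couplings ξ ν, GWobj γ.1

/-- The support of a measure: points all of whose open neighborhoods have positive measure. -/
def msupport {X : Type*} [TopologicalSpace X] [MeasurableSpace X] (ξ : Measure X) : Set X :=
  {x | ∀ U : Set X, IsOpen U → x ∈ U → 0 < ξ U}

/-- Pushforward `I,#ξ` of `ξ` under a map defined on the support of `ξ`. -/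
noncomputable def pushSupp {X Z : Type*} [MetricSpace X] [MetricSpace Z]
    [MeasurableSpace X] [MeasurableSpace Z]
    (ξ : Measure X) (I : msupport ξ → Z) : Measure Z :=
  Measure.map I (Measure.comap Subtype.val ξ)

/-- The objective of the `EW_λ` problem evaluated at a plan `π` on `Z × Z`. -/
noncomputable def EWobj {X₁ X₂ Z : Type*} [MetricSpace X₁] [MetricSpace X₂] [MetricSpace Z]
    [MeasurableSpace X₁] [MeasurableSpace X₂] [MeasurableSpace Z]
    (lam : ℝ) (ξ₁ : Measure X₁) (ξ₂ : Measure X₂) (π : Measure (Z × Z)) : ℝ :=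
  (∫ p : Z × Z, dist p.1 p.2 ^ 2 ∂π)
    + lam * (GWsq ξ₁ (π.map Prod.fst) + GWsq ξ₂ (π.map Prod.snd))

/-- `EW_λ(𝕏₁, 𝕏₂)²`: infimum of the `EW_λ` objective over probability measures on `Z × Z`. -/
noncomputable def EWlamSq {X₁ X₂ : Type*} (Z : Type*) [MetricSpace X₁] [MetricSpace X₂] [MetricSpace Z]
    [MeasurableSpace X₁] [MeasurableSpace X₂] [MeasurableSpace Z]
    (lam : ℝ) (ξ₁ : Measure X₁) (ξ₂ : Measure X₂) : ℝ :=
  ⨅ π : {π : Measure (Z × Z) // IsProbabilityMeasure π}, EWobj lam ξ₁ ξ₂ π.1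

/-- `EW(𝕏₁, 𝕏₂)²`: infimum over isometric embeddings of the supports into `Z`. -/
noncomputable def EWsq {X₁ X₂ : Type*} (Z : Type*) [MetricSpace X₁] [MetricSpace X₂] [MetricSpace Z]
    [MeasurableSpace X₁] [MeasurableSpace X₂] [MeasurableSpace Z]
    (ξ₁ : Measure X₁) (ξ₂ : Measure X₂) : ℝ :=
  ⨅ (I₁ : {f : msupport ξ₁ → Z // Isometry f}) (I₂ : {f : msupport ξ₂ → Z // Isometry f}),
    W2sq (pushSupp ξ₁ I₁.1) (pushSupp ξ₂ I₂.1)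

/-- Weak convergence of a sequence of measures. -/
def WeakConv {Z : Type*} [TopologicalSpace Z] [MeasurableSpace Z]
    (μs : ℕ → Measure Z) (μ : Measure Z) : Prop :=
  ∀ φ : Z → ℝ, Continuous φ →
    Tendsto (fun n => ∫ z, φ z ∂(μs n)) atTop (nhds (∫ z, φ z ∂μ))

/-- The integrand cost of the quadratic multi-marginal problem on `X₁ × Z × Z × X₂`. -/
noncomputable def qcost {X₁ X₂ Z : Type*} [MetricSpace X₁] [MetricSpace X₂] [MetricSpace Z]
    (lam : ℝ) (p q : X₁ × Z × Z × X₂) : ℝ :=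
  (dist p.2.1 p.2.2.1 ^ 2 + dist q.2.1 q.2.2.1 ^ 2) / 2
    + lam * ((dist p.1 q.1 - dist p.2.1 q.2.1) ^ 2
        + (dist p.2.2.2 q.2.2.2 - dist p.2.2.1 q.2.2.1) ^ 2)

/-- The quadratic functional `F_λ`. -/
noncomputable def Flam {X₁ X₂ Z : Type*} [MetricSpace X₁] [MetricSpace X₂] [MetricSpace Z]
    [MeasurableSpace X₁] [MeasurableSpace X₂] [MeasurableSpace Z]
    (lam : ℝ) (α : Measure (X₁ × Z × Z × X₂)) : ℝ :=
  ∫ pq, qcost lam pq.1 pq.2 ∂(α.prod α)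

/-- Admissible 4-plans: probability measures with prescribed `X₁`- and `X₂`-marginals. -/
def Adm {X₁ X₂ : Type*} (Z : Type*) [MetricSpace X₁] [MetricSpace X₂] [MetricSpace Z]
    [MeasurableSpace X₁] [MeasurableSpace X₂] [MeasurableSpace Z]
    (ξ₁ : Measure X₁) (ξ₂ : Measure X₂) : Set (Measure (X₁ × Z × Z × X₂)) :=
  {α | IsProbabilityMeasure α ∧ (α.map fun a => a.1) = ξ₁ ∧ (α.map fun a => a.2.2.2) = ξ₂}

open ProbabilityTheory

section Helpers

lemma GWobj_nonneg {X Y : Type*} [MetricSpace X] [MetricSpace Y]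
    [MeasurableSpace X] [MeasurableSpace Y] (γ : Measure (X × Y)) : 0 ≤ GWobj γ :=
  integral_nonneg fun _ => sq_nonneg _

lemma GWsq_nonneg {X Y : Type*} [MetricSpace X] [MetricSpace Y]
    [MeasurableSpace X] [MeasurableSpace Y] (ξ : Measure X) (ν : Measure Y) : 0 ≤ GWsq ξ ν :=
  Real.iInf_nonneg fun _ => GWobj_nonneg _

lemma GWsq_le {X Y : Type*} [MetricSpace X] [MetricSpace Y]
    [MeasurableSpace X] [MeasurableSpace Y] {ξ : Measure X} {ν : Measure Y}
    {γ : Measure (X × Y)} (hγ : γ ∈ couplings ξ ν) : GWsq ξ ν ≤ GWobj γ :=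
  ciInf_le (f := fun γ : couplings ξ ν => GWobj γ.1)
    ⟨0, by rintro _ ⟨γ, rfl⟩; exact GWobj_nonneg _⟩ ⟨γ, hγ⟩

lemma EWobj_nonneg {X₁ X₂ Z : Type*} [MetricSpace X₁] [MetricSpace X₂] [MetricSpace Z]
    [MeasurableSpace X₁] [MeasurableSpace X₂] [MeasurableSpace Z]
    {lam : ℝ} (hlam : 0 ≤ lam) {ξ₁ : Measure X₁} {ξ₂ : Measure X₂} {π : Measure (Z × Z)} :
    0 ≤ EWobj lam ξ₁ ξ₂ π :=
  add_nonneg (integral_nonneg fun _ => sq_nonneg _)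
    (mul_nonneg hlam (add_nonneg (GWsq_nonneg _ _) (GWsq_nonneg _ _)))

/-- The Gromov–Wasserstein infimum is attained on compact spaces: the couplings form a closed
subset of the weakly compact space of probability measures, and `GWobj` is weakly continuous
there because its integrand is continuous and `γ ↦ γ ⊗ γ` is weakly continuous. -/
lemma exists_GW_minimizer {X Y : Type*} [MetricSpace X] [CompactSpace X] [MetricSpace Y]
    [CompactSpace Y] [MeasurableSpace X] [BorelSpace X] [MeasurableSpace Y] [BorelSpace Y]
    (ξ : Measure X) (ν : Measure Y) [IsProbabilityMeasure ξ] [IsProbabilityMeasure ν] :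
    ∃ γ ∈ couplings ξ ν, GWobj γ = GWsq ξ ν := by
  let P : Set (ProbabilityMeasure (X × Y)) := {γ | γ.toMeasure ∈ couplings ξ ν}
  have hP : P = {γ | γ.map (f := Prod.fst) measurable_fst.aemeasurable = ⟨ξ, inferInstance⟩} ∩
      {γ | γ.map (f := Prod.snd) measurable_snd.aemeasurable = ⟨ν, inferInstance⟩} := by
    ext γ
    exact and_congr (Subtype.ext_iff (a1 := γ.map measurable_fst.aemeasurable)
      (a2 := ⟨ξ, inferInstance⟩)).symm (Subtype.ext_iff
      (a1 := γ.map measurable_snd.aemeasurable) (a2 := ⟨ν, inferInstance⟩)).symm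
  have hclosed : IsClosed P := by
    rw [hP]
    exact (isClosed_eq (ProbabilityMeasure.continuous_map continuous_fst)
      continuous_const).inter
      (isClosed_eq (ProbabilityMeasure.continuous_map continuous_snd) continuous_const)
  have hne : P.Nonempty := by
    refine ⟨⟨ξ.prod ν, inferInstance⟩, ?_⟩
    show ξ.prod ν ∈ couplings ξ ν
    exact ⟨by simp [Measure.map_fst_prod], by simp [Measure.map_snd_prod]⟩
  let f : C((X × Y) × (X × Y), ℝ) :=
    ⟨fun q => (dist q.1.1 q.2.1 - dist q.1.2 q.2.2) ^ 2, by fun_prop⟩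
  have hcont : Continuous fun γ : ProbabilityMeasure (X × Y) => GWobj γ.toMeasure := by
    have h1 : Continuous fun γ : ProbabilityMeasure (X × Y) => γ.prod γ :=
      ProbabilityMeasure.continuous_prod.comp (continuous_id.prodMk continuous_id)
    exact (ProbabilityMeasure.continuous_integral_boundedContinuousFunction
      (BoundedContinuousFunction.mkOfCompact f)).comp h1
  obtain ⟨γ, hγ, hmin⟩ := hclosed.isCompact.exists_isMinOn hne hcont.continuousOn
  refine ⟨γ.toMeasure, hγ, le_antisymm ?_ (GWsq_le hγ)⟩
  have : Nonempty (couplings ξ ν) := ⟨⟨_, hγ⟩⟩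
  refine le_ciInf fun γ' => ?_
  have hp : IsProbabilityMeasure γ'.1 := by
    have h : IsProbabilityMeasure (γ'.1.map Prod.fst) := by rw [γ'.2.1]; infer_instance
    exact Measure.isProbabilityMeasure_of_map Prod.fst
  exact hmin (show (⟨γ'.1, hp⟩ : ProbabilityMeasure (X × Y)) ∈ P from γ'.2)

/-- Gluing along a map: if the `Z`-marginal of `γ` on `X × Z` is the image of `μ` under `f`,
there is a coupling of `μ` with an `X`-coordinate whose image under `f` in the second variable
is `γ`. The conditional law of the new coordinate at `y` is that of `γ` given `z = f y`. -/
lemma exists_glue {X Y Z : Type*} [MeasurableSpace X] [StandardBorelSpace X] [Nonempty X]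
    [MeasurableSpace Y] [MeasurableSpace Z] (μ : Measure Y) [IsProbabilityMeasure μ]
    {f : Y → Z} (hf : Measurable f) (γ : Measure (X × Z)) [IsProbabilityMeasure γ]
    (hγ : γ.map Prod.snd = μ.map f) :
    ∃ ρ : Measure (X × Y), IsProbabilityMeasure ρ ∧ ρ.map Prod.snd = μ ∧
      ρ.map (fun p => (p.1, f p.2)) = γ := by
  let γ' : Measure (Z × X) := γ.map Prod.swap
  have hγ'p : IsProbabilityMeasure γ' := Measure.isProbabilityMeasure_map (by fun_prop)
  have hfst : γ'.fst = μ.map f := by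
    rw [← hγ, Measure.fst, Measure.map_map measurable_fst measurable_swap]
    rfl
  let κ : Kernel Y X := γ'.condKernel.comap f hf
  have hmain : (μ ⊗ₘ κ).map (Prod.map f id) = γ' := by
    conv_rhs => rw [← γ'.disintegrate γ'.condKernel, hfst]
    ext s hs
    rw [Measure.map_apply (by fun_prop) hs, Measure.compProd_apply (by measurability),
      Measure.compProd_apply hs, lintegral_map (Kernel.measurable_kernel_prodMk_left hs) hf]
    rfl
  refine ⟨(μ ⊗ₘ κ).map Prod.swap, Measure.isProbabilityMeasure_map (by fun_prop), ?_, ?_⟩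
  · rw [Measure.map_map measurable_snd measurable_swap]
    exact Measure.fst_compProd μ κ
  · have h2 : γ = γ'.map Prod.swap := by
      rw [Measure.map_map measurable_swap measurable_swap]
      simp
    rw [h2, ← hmain, Measure.map_map (by fun_prop) measurable_swap,
      Measure.map_map measurable_swap (by fun_prop)]
    rfl

lemma coupling_left {X₁ X₂ Z : Type*} [MetricSpace X₁] [MetricSpace X₂] [MetricSpace Z]
    [MeasurableSpace X₁] [MeasurableSpace X₂] [MeasurableSpace Z]
    {ξ₁ : Measure X₁} {ξ₂ : Measure X₂} {α : Measure (X₁ × Z × Z × X₂)}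
    (hα : α ∈ Adm Z ξ₁ ξ₂) : (α.map fun a => (a.1, a.2.1))
      ∈ couplings ξ₁ ((α.map fun a => (a.2.1, a.2.2.1)).map Prod.fst) := by
  constructor
  · rw [Measure.map_map (by fun_prop) (by fun_prop)]
    exact hα.2.1
  · rw [Measure.map_map (by fun_prop) (by fun_prop), Measure.map_map (by fun_prop) (by fun_prop)]
    rfl

lemma coupling_right {X₁ X₂ Z : Type*} [MetricSpace X₁] [MetricSpace X₂] [MetricSpace Z]
    [MeasurableSpace X₁] [MeasurableSpace X₂] [MeasurableSpace Z]
    {ξ₁ : Measure X₁} {ξ₂ : Measure X₂} {α : Measure (X₁ × Z × Z × X₂)}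
    (hα : α ∈ Adm Z ξ₁ ξ₂) : (α.map fun a => (a.2.2.2, a.2.2.1))
      ∈ couplings ξ₂ ((α.map fun a => (a.2.1, a.2.2.1)).map Prod.snd) := by
  constructor
  · rw [Measure.map_map (by fun_prop) (by fun_prop)]
    exact hα.2.2
  · rw [Measure.map_map (by fun_prop) (by fun_prop), Measure.map_map (by fun_prop) (by fun_prop)]
    rfl

variable {X₁ X₂ Z : Type*} [MetricSpace X₁] [CompactSpace X₁] [MetricSpace X₂] [CompactSpace X₂]
    [MetricSpace Z] [CompactSpace Z]
    [MeasurableSpace X₁] [BorelSpace X₁] [MeasurableSpace X₂] [BorelSpace X₂]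
    [MeasurableSpace Z] [BorelSpace Z]

lemma integrable_of_continuous_of_compactSpace {W : Type*} [TopologicalSpace W] [T2Space W] [CompactSpace W]
    [MeasurableSpace W] [OpensMeasurableSpace W] {μ : Measure W} [IsFiniteMeasure μ]
    {f : W → ℝ} (hf : Continuous f) : Integrable f μ := by
  simpa using hf.continuousOn.integrableOn_compact (μ := μ) isCompact_univ

lemma GWobj_map {A X Y : Type*} [MeasurableSpace A] [MetricSpace X] [CompactSpace X]
    [MetricSpace Y] [CompactSpace Y] [MeasurableSpace X] [BorelSpace X] [MeasurableSpace Y]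
    [BorelSpace Y] (α : Measure A) [IsProbabilityMeasure α] {f : A → X × Y} (hf : Measurable f) :
    GWobj (α.map f) = ∫ q : A × A,
      (dist (f q.1).1 (f q.2).1 - dist (f q.1).2 (f q.2).2) ^ 2 ∂(α.prod α) := by
  rw [GWobj, Measure.map_prod_map _ _ hf hf, integral_map (by fun_prop)
    (Continuous.aestronglyMeasurable (by fun_prop))]
  rfl

/-- `F_λ(α)` only depends on the pair marginals of `α`. -/
lemma Flam_eq (lam : ℝ) (α : Measure (X₁ × Z × Z × X₂)) [IsProbabilityMeasure α] :
    Flam lam α = (∫ p : Z × Z, dist p.1 p.2 ^ 2 ∂(α.map fun a => (a.2.1, a.2.2.1)))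
      + lam * (GWobj (α.map fun a => (a.1, a.2.1))
        + GWobj (α.map fun a => (a.2.2.2, a.2.2.1))) := by
  rw [GWobj_map α (by fun_prop), GWobj_map α (by fun_prop),
    integral_map (by fun_prop) (Continuous.aestronglyMeasurable (by fun_prop))]
  have e1 := integral_fun_fst (μ := α) (ν := α)
    (fun p : X₁ × Z × Z × X₂ => dist p.2.1 p.2.2.1 ^ 2)
  have e2 := integral_fun_snd (μ := α) (ν := α)
    (fun p : X₁ × Z × Z × X₂ => dist p.2.1 p.2.2.1 ^ 2)
  simp only [probReal_univ, one_smul] at e1 e2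
  simp only [Flam, qcost]
  rw [integral_add, integral_div, integral_add, e1, e2, integral_const_mul, integral_add]
  · ring
  all_goals exact integrable_of_continuous_of_compactSpace (by fun_prop)

/-- Every plan `π` lifts to an admissible 4-plan whose `F_λ` value is the `EW_λ` objective at
`π`: glue GW-optimal couplings to the two marginals of `π`. -/
lemma exists_lift (lam : ℝ) (ξ₁ : Measure X₁) (ξ₂ : Measure X₂) [IsProbabilityMeasure ξ₁]
    [IsProbabilityMeasure ξ₂] (π : Measure (Z × Z)) [IsProbabilityMeasure π] :
    ∃ α ∈ Adm Z ξ₁ ξ₂, Flam lam α = EWobj lam ξ₁ ξ₂ π ∧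
      (α.map fun a => (a.2.1, a.2.2.1)) = π := by
  have : Nonempty X₁ := nonempty_of_isProbabilityMeasure ξ₁
  have : Nonempty X₂ := nonempty_of_isProbabilityMeasure ξ₂
  have : IsProbabilityMeasure (π.map Prod.fst) := Measure.isProbabilityMeasure_map (by fun_prop)
  have : IsProbabilityMeasure (π.map Prod.snd) := Measure.isProbabilityMeasure_map (by fun_prop)
  obtain ⟨γ₁, hγ₁, hG₁⟩ := exists_GW_minimizer ξ₁ (π.map Prod.fst)
  obtain ⟨γ₂, hγ₂, hG₂⟩ := exists_GW_minimizer ξ₂ (π.map Prod.snd)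
  have : IsProbabilityMeasure γ₁ := by
    have h : IsProbabilityMeasure (γ₁.map Prod.fst) := by rw [hγ₁.1]; infer_instance
    exact Measure.isProbabilityMeasure_of_map Prod.fst
  have : IsProbabilityMeasure γ₂ := by
    have h : IsProbabilityMeasure (γ₂.map Prod.fst) := by rw [hγ₂.1]; infer_instance
    exact Measure.isProbabilityMeasure_of_map Prod.fst
  obtain ⟨ρ, hρ, hρπ, hργ⟩ := exists_glue π measurable_fst γ₁ hγ₁.2
  obtain ⟨σ, hσ, hσρ, hσγ⟩ := exists_glue ρ (f := fun p : X₁ × Z × Z => p.2.2) (by fun_prop) γ₂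
    (by rw [hγ₂.2, ← hρπ, Measure.map_map (by fun_prop) (by fun_prop)]; rfl)
  -- reorder the coordinates of `σ` on `X₂ × (X₁ × Z × Z)`
  let r : X₂ × (X₁ × Z × Z) → X₁ × Z × Z × X₂ := fun p => (p.2.1, p.2.2.1, p.2.2.2, p.1)
  have hr : Measurable r := by fun_prop
  have hα : IsProbabilityMeasure (σ.map r) := Measure.isProbabilityMeasure_map hr.aemeasurable
  have hπ' : ((σ.map r).map fun a => (a.2.1, a.2.2.1)) = π := by
    rw [← hρπ, ← hσρ, Measure.map_map (by fun_prop) hr,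
      Measure.map_map (by fun_prop) (by fun_prop)]
    rfl
  have h1 : ((σ.map r).map fun a => (a.1, a.2.1)) = γ₁ := by
    rw [← hργ, ← hσρ, Measure.map_map (by fun_prop) hr,
      Measure.map_map (by fun_prop) (by fun_prop)]
    rfl
  have h2 : ((σ.map r).map fun a => (a.2.2.2, a.2.2.1)) = γ₂ := by
    rw [← hσγ, Measure.map_map (by fun_prop) hr]
    rfl
  refine ⟨σ.map r, ⟨hα, ?_, ?_⟩, ?_, hπ'⟩
  · rw [← hγ₁.1, ← h1]
    exact (Measure.map_map measurable_fst (f := fun a : X₁ × Z × Z × X₂ => (a.1, a.2.1))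
      (by fun_prop)).symm
  · rw [← hγ₂.1, ← h2]
    exact (Measure.map_map measurable_fst (f := fun a : X₁ × Z × Z × X₂ => (a.2.2.2, a.2.2.1))
      (by fun_prop)).symm
  · rw [Flam_eq, hπ', h1, h2, hG₁, hG₂, EWobj]

end Helpers

theorem stmt15
    {X₁ X₂ Z : Type*} [MetricSpace X₁] [CompactSpace X₁] [MetricSpace X₂] [CompactSpace X₂]
    [MetricSpace Z] [CompactSpace Z]
    [MeasurableSpace X₁] [BorelSpace X₁] [MeasurableSpace X₂] [BorelSpace X₂]
    [MeasurableSpace Z] [BorelSpace Z]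
    (ξ₁ : Measure X₁) (ξ₂ : Measure X₂) [IsProbabilityMeasure ξ₁] [IsProbabilityMeasure ξ₂]
    (lam : ℝ) (hlam : 0 < lam) :
    (∀ α ∈ Adm Z ξ₁ ξ₂, (∀ β ∈ Adm Z ξ₁ ξ₂, Flam lam α ≤ Flam lam β) →
      (EWobj lam ξ₁ ξ₂ (α.map fun a => (a.2.1, a.2.2.1)) = EWlamSq Z lam ξ₁ ξ₂
        ∧ (α.map fun a => (a.1, a.2.1))
            ∈ couplings ξ₁ ((α.map fun a => (a.2.1, a.2.2.1)).map Prod.fst)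
        ∧ GWobj (α.map fun a => (a.1, a.2.1))
            = GWsq ξ₁ ((α.map fun a => (a.2.1, a.2.2.1)).map Prod.fst)
        ∧ (α.map fun a => (a.2.2.2, a.2.2.1))
            ∈ couplings ξ₂ ((α.map fun a => (a.2.1, a.2.2.1)).map Prod.snd)
        ∧ GWobj (α.map fun a => (a.2.2.2, a.2.2.1))
            = GWsq ξ₂ ((α.map fun a => (a.2.1, a.2.2.1)).map Prod.snd)))
    ∧ (∀ π : Measure (Z × Z), IsProbabilityMeasure π →
        EWobj lam ξ₁ ξ₂ π = EWlamSq Z lam ξ₁ ξ₂ →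
        ∃ α ∈ Adm Z ξ₁ ξ₂, (∀ β ∈ Adm Z ξ₁ ξ₂, Flam lam α ≤ Flam lam β)
          ∧ π = α.map fun a => (a.2.1, a.2.2.1))
    ∧ EWlamSq Z lam ξ₁ ξ₂ = ⨅ α : Adm Z ξ₁ ξ₂, Flam lam α.1 := by 
  have hlow : ∀ α ∈ Adm Z ξ₁ ξ₂,
      EWobj lam ξ₁ ξ₂ (α.map fun a => (a.2.1, a.2.2.1)) ≤ Flam lam α := fun α hα => by
    have := hα.1
    rw [Flam_eq, EWobj]
    have h1 := GWsq_le (coupling_left hα)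
    have h2 := GWsq_le (coupling_right hα)
    gcongr
  have hbdd : BddBelow (Set.range fun π : {π : Measure (Z × Z) // IsProbabilityMeasure π} =>
      EWobj lam ξ₁ ξ₂ π.1) := ⟨0, by rintro _ ⟨π, rfl⟩; exact EWobj_nonneg hlam.le⟩
  have hbddF : BddBelow (Set.range fun α : Adm Z ξ₁ ξ₂ => Flam lam α.1) :=
    ⟨0, by
      rintro _ ⟨α, rfl⟩
      exact (EWobj_nonneg hlam.le).trans (hlow α.1 α.2)⟩
  have hprob : ∀ α ∈ Adm Z ξ₁ ξ₂,
      IsProbabilityMeasure (α.map fun a => (a.2.1, a.2.2.1)) := fun α hα => by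
    have := hα.1
    exact Measure.isProbabilityMeasure_map (by fun_prop)
  refine ⟨fun α hα hmin => ?_, fun π hπ hmin => ?_, ?_⟩
  · have := hα.1
    have := hprob α hα
    have c1 := coupling_left hα
    have c2 := coupling_right hα
    have h1 := GWsq_le c1
    have h2 := GWsq_le c2
    obtain ⟨β, hβ, hβF, -⟩ := exists_lift lam ξ₁ ξ₂ (α.map fun a => (a.2.1, a.2.2.1))
    have h3 := (hmin β hβ).trans_eq hβF
    rw [Flam_eq, EWobj] at h3
    have h4 := le_of_mul_le_mul_left (le_of_add_le_add_left h3) hlam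
    refine ⟨le_antisymm ?_ (ciInf_le hbdd ⟨_, hprob α hα⟩), c1, by linarith, c2, by linarith⟩
    have : Nonempty {π : Measure (Z × Z) // IsProbabilityMeasure π} := ⟨⟨_, hprob α hα⟩⟩
    refine le_ciInf fun π => ?_
    have := π.2
    obtain ⟨β, hβ, hβF, -⟩ := exists_lift lam ξ₁ ξ₂ π.1
    exact (hlow α hα).trans ((hmin β hβ).trans_eq hβF)
  · obtain ⟨α, hα, hαF, hαπ⟩ := exists_lift lam ξ₁ ξ₂ π
    refine ⟨α, hα, fun β hβ => ?_, hαπ.symm⟩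
    rw [hαF, hmin]
    exact (ciInf_le hbdd ⟨_, hprob β hβ⟩).trans (hlow β hβ)
  · rcases isEmpty_or_nonempty (Adm Z ξ₁ ξ₂) with hE | ⟨⟨α₀, hα₀⟩⟩
    · -- no admissible plan means no `π` either, so both infima take the junk value `0`
      have : IsEmpty {π : Measure (Z × Z) // IsProbabilityMeasure π} := ⟨fun π => by
        have := π.2
        obtain ⟨β, hβ, -⟩ := exists_lift lam ξ₁ ξ₂ π.1
        exact hE.false ⟨β, hβ⟩⟩
      rw [EWlamSq, Real.iInf_of_isEmpty, Real.iInf_of_isEmpty]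
    · have : Nonempty (Adm Z ξ₁ ξ₂) := ⟨⟨α₀, hα₀⟩⟩
      have : Nonempty {π : Measure (Z × Z) // IsProbabilityMeasure π} := ⟨⟨_, hprob α₀ hα₀⟩⟩
      refine le_antisymm (le_ciInf fun α => ?_) (le_ciInf fun π => ?_)
      · exact (ciInf_le hbdd ⟨_, hprob α.1 α.2⟩).trans (hlow α.1 α.2)
      · have := π.2
        obtain ⟨β, hβ, hβF, -⟩ := exists_lift lam ξ₁ ξ₂ π.1
        exact (ciInf_le hbddF ⟨β, hβ⟩).trans_eq hβF
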